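/- arXiv:math/9201214 — 2 statements merged into one kernel-verified Lean document; each statement's English description precedes it below -/
import Mathlib

section
/- Let E ⊆ ℕ be a finite set, let z be a nonzero real sequence supported on E, and let c > 0 satisfy c·|z|_{2,w} ≥ ω(E)^{(p-2)/(2p)} · |z|_p. Define the linear functional z*(x) = |z|_{2,w}^{-2} · ∑_{n∈E} z(n) x(n) w_n². Then for every real sequence x with |x_{|E}|_p < ∞: (i) |z*(x)| · |z|_{2,w} ≤ |x_{|E}|_{2,w}, and (ii) |z*(x)| · |z|_p ≤ c · |x_{|E}|_p. -/
open scoped ENNReal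

noncomputable section

/-- The `ℓ^p` norm of a real sequence, valued in `ℝ≥0∞`. -/
def pNorm (p : ℝ) (a : ℕ → ℝ) : ℝ≥0∞ :=
  (∑' n, ENNReal.ofReal (|a n| ^ p)) ^ (1 / p)

/-- The weighted `ℓ²` norm `|a|_{2,w}`, valued in `ℝ≥0∞`. -/
def wNorm (w : ℕ → ℝ) (a : ℕ → ℝ) : ℝ≥0∞ :=
  (∑' n, ENNReal.ofReal ((a n) ^ 2 * (w n) ^ 2)) ^ (1 / (2 : ℝ))

/-- `ω(E) = ∑_{n ∈ E} w_n^{2p/(p-2)}`, valued in `ℝ≥0∞`. -/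
def omegaE (p : ℝ) (w : ℕ → ℝ) (E : Set ℕ) : ℝ≥0∞ :=
  ∑' n : E, ENNReal.ofReal (w n ^ (2 * p / (p - 2)))

/-! For `a` supported on `E`, Hölder's inequality with `1/2 = 1/p + (p-2)/(2p)` gives
`|a|_{2,w} ≤ ω(E)^{(p-2)/(2p)} |a|_p`. Cauchy–Schwarz gives
`|z*(x)| |z|_{2,w} ≤ |x_{|E}|_{2,w}`, and multiplying this by `|z|_p` yields
`|z*(x)| |z|_{2,w} |z|_p ≤ ω(E)^{(p-2)/(2p)} |z|_p |x_{|E}|_p ≤ c |z|_{2,w} |x_{|E}|_p`,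
where `|z|_{2,w}` cancels. For infinite `E` and `|z|_{2,w} < ∞`, the inequality between `c` and `z`
forces `ω(E) < ∞`, so that `|x_{|E}|_{2,w} < ∞` and the series defining `z*(x)` converges. -/

theorem Lr_le_Lp_mul_Lq_tsum_ennreal {ι : Type*} {p q r : ℝ} (hpqr : p.HolderTriple q r)
    (f g : ι → ℝ≥0∞) :
    (∑' i, (f i * g i) ^ r) ^ (1 / r) ≤ (∑' i, f i ^ p) ^ (1 / p) * (∑' i, g i ^ q) ^ (1 / q) := by
  let _ : MeasurableSpace ι := ⊤
  have hrp : 1 / r = 1 / p + 1 / q := by simpa using hpqr.inv_add_inv_eq_inv.symm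
  simpa only [MeasureTheory.lintegral_count, Pi.mul_apply] using
    ENNReal.lintegral_Lp_mul_le_Lq_mul_Lr hpqr.pos' hpqr.lt hrp MeasureTheory.Measure.count
      (measurable_from_top (f := f)).aemeasurable (measurable_from_top (f := g)).aemeasurable

theorem pNorm_eq_tsum_enorm {p : ℝ} (hp : 0 ≤ p) (a : ℕ → ℝ) :
    pNorm p a = (∑' n, ‖a n‖ₑ ^ p) ^ (1 / p) := by
  simp only [pNorm, Real.enorm_eq_ofReal_abs, ENNReal.ofReal_rpow_of_nonneg (abs_nonneg _) hp]

theorem wNorm_eq_tsum_enorm (w a : ℕ → ℝ) :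
    wNorm w a = (∑' n, ‖a n * w n‖ₑ ^ (2 : ℝ)) ^ (1 / (2 : ℝ)) := by
  simp only [wNorm, Real.enorm_eq_ofReal_abs,
    ENNReal.ofReal_rpow_of_nonneg (abs_nonneg _) zero_le_two, Real.rpow_two, sq_abs, mul_pow]

theorem omegaE_eq_tsum_enorm_indicator {p : ℝ} (hp : 2 < p) {w : ℕ → ℝ} (hw : ∀ n, 0 ≤ w n)
    (E : Set ℕ) : omegaE p w E = ∑' n, ‖E.indicator w n‖ₑ ^ (2 * p / (p - 2)) := by
  have hr : 0 < 2 * p / (p - 2) := div_pos (by linarith) (by linarith)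
  rw [omegaE, tsum_subtype E fun n => ENNReal.ofReal (w n ^ (2 * p / (p - 2)))]
  refine tsum_congr fun n => ?_
  by_cases hn : n ∈ E
  · simp only [Set.indicator_of_mem hn, Real.enorm_eq_ofReal (hw n),
      ENNReal.ofReal_rpow_of_nonneg (hw n) hr.le]
  · simp only [Set.indicator_of_notMem hn, enorm_zero, ENNReal.zero_rpow_of_pos hr]

theorem wNorm_le_omegaE_rpow_mul_pNorm {p : ℝ} (hp : 2 < p) {w : ℕ → ℝ} (hw : ∀ n, 0 ≤ w n)
    {E : Set ℕ} {a : ℕ → ℝ} (ha : ∀ n ∉ E, a n = 0) :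
    wNorm w a ≤ omegaE p w E ^ ((p - 2) / (2 * p)) * pNorm p a := by
  have hp₂ : 0 < p - 2 := sub_pos.2 hp
  have hp₀ : 0 < p := by linarith
  have h_exp : (2 * p / (p - 2)).HolderTriple p 2 :=
    { inv_add_inv_eq_inv := by field_simp; ring
      left_pos := div_pos (by linarith) hp₂
      right_pos := hp₀ }
  have h_restrict (n : ℕ) : ‖a n * w n‖ₑ = ‖E.indicator w n‖ₑ * ‖a n‖ₑ := by
    by_cases hn : n ∈ E
    · rw [Set.indicator_of_mem hn, enorm_mul, mul_comm]
    · simp only [ha n hn, zero_mul, enorm_zero, mul_zero]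
  rw [wNorm_eq_tsum_enorm, omegaE_eq_tsum_enorm_indicator hp hw, pNorm_eq_tsum_enorm hp₀.le,
    ← one_div_div (2 * p)]
  simpa only [h_restrict] using
    Lr_le_Lp_mul_Lq_tsum_ennreal h_exp (fun n => ‖E.indicator w n‖ₑ) fun n => ‖a n‖ₑ

theorem wNorm_ne_zero_of_pos {w a : ℕ → ℝ} (hw : ∀ n, 0 < w n) (ha : a ≠ 0) : wNorm w a ≠ 0 := by
  obtain ⟨m, hm⟩ := Function.ne_iff.1 ha
  have h_term : ‖a m * w m‖ₑ ^ (2 : ℝ) ≠ 0 := by simpa [(hw m).ne'] using hm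
  rw [wNorm_eq_tsum_enorm, ne_eq, ENNReal.rpow_eq_zero_iff_of_pos one_half_pos]
  exact fun h => h_term (ENNReal.tsum_eq_zero.1 h m)

theorem wNorm_ne_top_of_finite (w : ℕ → ℝ) {E : Set ℕ} (hE : E.Finite) {a : ℕ → ℝ}
    (ha : ∀ n ∉ E, a n = 0) : wNorm w a ≠ ⊤ := by
  refine ENNReal.rpow_ne_top_of_nonneg one_half_pos.le ?_
  rw [tsum_eq_sum (s := hE.toFinset) fun n hn => by simp [ha n (by simpa using hn)]]
  exact ENNReal.sum_ne_top.2 fun _ _ => ENNReal.ofReal_ne_top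

theorem tsum_enorm_mul_mul_sq_le (w a b : ℕ → ℝ) :
    ∑' n, ‖a n * b n * w n ^ 2‖ₑ ≤ wNorm w a * wNorm w b := by
  have h_exp : (2 : ℝ).HolderTriple 2 1 := by constructor <;> norm_num
  have h_split (n : ℕ) : ‖a n * b n * w n ^ 2‖ₑ = ‖a n * w n‖ₑ * ‖b n * w n‖ₑ := by
    rw [← enorm_mul]
    ring_nf
  rw [wNorm_eq_tsum_enorm, wNorm_eq_tsum_enorm]
  simpa only [h_split, ENNReal.rpow_one, div_one] using
    Lr_le_Lp_mul_Lq_tsum_ennreal h_exp (fun n => ‖a n * w n‖ₑ) fun n => ‖b n * w n‖ₑ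

/-- The functional `z*`, i.e. pairing with `z / |z|_{2,w}²` in the weighted `ℓ²` inner product. The
sum runs over all of `ℕ`, so for `z` supported on `E` it is the sum over `E`. -/
def dualFunctional (w z x : ℕ → ℝ) : ℝ :=
  ((wNorm w z).toReal ^ 2)⁻¹ * ∑' n, z n * x n * w n ^ 2

theorem mul_indicator_of_eq_zero {E : Set ℕ} {z : ℕ → ℝ} (hz : ∀ n ∉ E, z n = 0) (x : ℕ → ℝ)
    (n : ℕ) : z n * E.indicator x n = z n * x n := by
  by_cases hn : n ∈ E
  · rw [Set.indicator_of_mem hn]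
  · simp only [hz n hn, zero_mul]

theorem dualFunctional_indicator (w : ℕ → ℝ) {E : Set ℕ} {z : ℕ → ℝ} (hz : ∀ n ∉ E, z n = 0)
    (x : ℕ → ℝ) : dualFunctional w z (E.indicator x) = dualFunctional w z x := by
  simp only [dualFunctional, mul_indicator_of_eq_zero hz]

theorem dualFunctional_eq_sum (w : ℕ → ℝ) {s : Finset ℕ} {z : ℕ → ℝ} (hz : ∀ n ∉ s, z n = 0)
    (x : ℕ → ℝ) :
    dualFunctional w z x = ((wNorm w z).toReal ^ 2)⁻¹ * ∑ n ∈ s, z n * x n * w n ^ 2 := by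
  rw [dualFunctional, tsum_eq_sum fun n hn => by simp [hz n hn]]

theorem enorm_dualFunctional_mul_wNorm_le {w z : ℕ → ℝ} (hz₀ : wNorm w z ≠ 0)
    (hz_top : wNorm w z ≠ ⊤) (x : ℕ → ℝ) :
    ‖dualFunctional w z x‖ₑ * wNorm w z ≤ wNorm w x := by
  have h_scale : ‖((wNorm w z).toReal ^ 2)⁻¹‖ₑ = (wNorm w z)⁻¹ * (wNorm w z)⁻¹ := by
    rw [enorm_inv (pow_ne_zero 2 (ENNReal.toReal_ne_zero.2 ⟨hz₀, hz_top⟩)), enorm_pow,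
      Real.enorm_toReal hz_top, ENNReal.inv_pow, sq]
  have h_pairing : ‖∑' n, z n * x n * w n ^ 2‖ₑ ≤ wNorm w z * wNorm w x :=
    enorm_tsum_le_tsum_enorm.trans (tsum_enorm_mul_mul_sq_le w z x)
  calc ‖dualFunctional w z x‖ₑ * wNorm w z
      = (wNorm w z)⁻¹ * (wNorm w z)⁻¹ * ‖∑' n, z n * x n * w n ^ 2‖ₑ * wNorm w z := by
        rw [dualFunctional, enorm_mul, h_scale]
    _ ≤ (wNorm w z)⁻¹ * (wNorm w z)⁻¹ * (wNorm w z * wNorm w x) * wNorm w z := by gcongr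
    _ = ((wNorm w z)⁻¹ * wNorm w z) * ((wNorm w z)⁻¹ * wNorm w z) * wNorm w x := by ring
    _ = wNorm w x := by rw [ENNReal.inv_mul_cancel hz₀ hz_top, one_mul, one_mul]

theorem omegaE_rpow_ne_top {p : ℝ} (hp : 2 < p) {w : ℕ → ℝ} (hw : ∀ n, 0 ≤ w n) {E : Set ℕ}
    {z : ℕ → ℝ} (hz : ∀ n ∉ E, z n = 0) (hz₀ : wNorm w z ≠ 0)
    (h_top : omegaE p w E ^ ((p - 2) / (2 * p)) * pNorm p z ≠ ⊤) :
    omegaE p w E ^ ((p - 2) / (2 * p)) ≠ ⊤ := by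
  have h_pos : omegaE p w E ^ ((p - 2) / (2 * p)) * pNorm p z ≠ 0 :=
    ((pos_iff_ne_zero.2 hz₀).trans_le (wNorm_le_omegaE_rpow_mul_pNorm hp hw hz)).ne'
  exact (ENNReal.lt_top_of_mul_ne_top_left h_top (right_ne_zero_of_mul h_pos)).ne

theorem summable_mul_mul_sq_of_indicator {w z x : ℕ → ℝ} {E : Set ℕ} (hz : ∀ n ∉ E, z n = 0)
    (hz_top : wNorm w z ≠ ⊤) (hx_top : wNorm w (E.indicator x) ≠ ⊤) :
    Summable fun n => z n * x n * w n ^ 2 := by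
  simp only [← mul_indicator_of_eq_zero hz x]
  exact .of_enorm (ne_top_of_le_ne_top (ENNReal.mul_ne_top hz_top hx_top)
    (tsum_enorm_mul_mul_sq_le w z (E.indicator x)))

theorem stmt1_general {p : ℝ} (hp : 2 < p) {w : ℕ → ℝ} (hw : ∀ n, 0 ≤ w n) {E : Set ℕ}
    {z : ℕ → ℝ} (hz : ∀ n ∉ E, z n = 0) (hz₀ : wNorm w z ≠ 0) (hz_top : wNorm w z ≠ ⊤) {c : ℝ}
    (hcz : omegaE p w E ^ ((p - 2) / (2 * p)) * pNorm p z ≤ ENNReal.ofReal c * wNorm w z)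
    {x : ℕ → ℝ} (hx : pNorm p (E.indicator x) ≠ ⊤) :
    (Summable fun n => z n * x n * w n ^ 2) ∧
    ENNReal.ofReal |dualFunctional w z x| * wNorm w z ≤ wNorm w (E.indicator x) ∧
    ENNReal.ofReal |dualFunctional w z x| * pNorm p z ≤
      ENNReal.ofReal c * pNorm p (E.indicator x) := by
  set Ω := omegaE p w E ^ ((p - 2) / (2 * p))
  have hΩ : Ω ≠ ⊤ := omegaE_rpow_ne_top hp hw hz hz₀
    (ne_top_of_le_ne_top (ENNReal.mul_ne_top ENNReal.ofReal_ne_top hz_top) hcz)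
  have hx_le : wNorm w (E.indicator x) ≤ Ω * pNorm p (E.indicator x) :=
    wNorm_le_omegaE_rpow_mul_pNorm hp hw fun _ hn => Set.indicator_of_notMem hn x
  have hx_top := ne_top_of_le_ne_top (ENNReal.mul_ne_top hΩ hx) hx_le
  rw [← Real.enorm_eq_ofReal_abs, ← dualFunctional_indicator w hz]
  have h_weighted := enorm_dualFunctional_mul_wNorm_le hz₀ hz_top (E.indicator x)
  refine ⟨summable_mul_mul_sq_of_indicator hz hz_top hx_top, h_weighted, ?_⟩
  rw [← ENNReal.mul_le_mul_iff_left hz₀ hz_top]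
  calc ‖dualFunctional w z (E.indicator x)‖ₑ * pNorm p z * wNorm w z
      = ‖dualFunctional w z (E.indicator x)‖ₑ * wNorm w z * pNorm p z := mul_right_comm ..
    _ ≤ Ω * pNorm p (E.indicator x) * pNorm p z := mul_le_mul_left (h_weighted.trans hx_le) _
    _ = Ω * pNorm p z * pNorm p (E.indicator x) := mul_right_comm ..
    _ ≤ ENNReal.ofReal c * wNorm w z * pNorm p (E.indicator x) := by gcongr
    _ = ENNReal.ofReal c * pNorm p (E.indicator x) * wNorm w z := mul_right_comm ..

/-- if `z ≠ 0` is supported on a finite set `E` and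
`c |z|_{2,w} ≥ ω(E)^{(p-2)/(2p)} |z|_p`, then the functional
`z*(x) = |z|_{2,w}⁻² ∑_{n ∈ E} z(n) x(n) w_n²` satisfies
`|z*(x)| |z|_{2,w} ≤ |x_{|E}|_{2,w}` and `|z*(x)| |z|_p ≤ c |x_{|E}|_p`
for every `x` with `|x_{|E}|_p < ∞`. -/
theorem stmt1 (p : ℝ) (hp : 2 < p) (w : ℕ → ℝ) (hw : ∀ n, 0 < w n)
    (E : Set ℕ) (hE : E.Finite)
    (z : ℕ → ℝ) (hzsupp : ∀ n ∉ E, z n = 0) (hz : z ≠ 0)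
    (c : ℝ) (hc : 0 < c)
    (hcz : ENNReal.ofReal c * wNorm w z ≥ omegaE p w E ^ ((p - 2) / (2 * p)) * pNorm p z)
    (zstar : (ℕ → ℝ) → ℝ)
    (hzstar : ∀ x : ℕ → ℝ,
      zstar x = ((wNorm w z).toReal ^ 2)⁻¹ * ∑ n ∈ hE.toFinset, z n * x n * w n ^ 2)
    (x : ℕ → ℝ) (hx : pNorm p (E.indicator x) < ⊤) :
    ENNReal.ofReal |zstar x| * wNorm w z ≤ wNorm w (E.indicator x) ∧
    ENNReal.ofReal |zstar x| * pNorm p z ≤ ENNReal.ofReal c * pNorm p (E.indicator x) := by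
  rw [hzstar, ← dualFunctional_eq_sum w fun n hn => hzsupp n (by simpa using hn)]
  exact (stmt1_general hp (fun n => (hw n).le) hzsupp (wNorm_ne_zero_of_pos hw hz)
    (wNorm_ne_top_of_finite w hE hzsupp) hcz hx.ne).2
end
end

section
/- Let y be a real sequence with 0 < |y|_{2,w} ≤ 1, let ρ > 0, and set E = { j ∈ ℕ : |y(j)| ≥ ρ · w_j^{2/(p-2)} · |y|_{2,w}^{-2/(p-2)} }. Then ∑_{j∉E} |y(j)|^p ≤ ρ^{p-2}; in particular |y_{|ℕ∖E}|_p ≤ ρ^{1-2/p}. -/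
open scoped ENNReal

noncomputable section

/-! Off `E` the threshold condition says that `|y|^(p-2) < ρ^(p-2) w² / |y|_{2,w}²`. Multiplying by
`y²` bounds `|y|^p` by `ρ^(p-2) / |y|_{2,w}²` times `y² w²`, and the sum of `y² w²` is `|y|_{2,w}²`.
The same argument works for any exponent `0 < q < p` in place of `2` and over any measure. -/

section MeasureSpace

open MeasureTheory

lemma rpow_le_of_le_mul_rpow_mul_rpow {p q a ρ w N : ℝ} (hp : p ≠ 0) (hqp : q < p) (ha : 0 ≤ a)
    (hρ : 0 ≤ ρ) (hw : 0 ≤ w) (hN : 0 ≤ N)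
    (h : a ≤ ρ * w ^ (q / (p - q)) * N ^ (-q / (p - q))) :
    a ^ p ≤ ρ ^ (p - q) * N ^ (-q) * (w * a) ^ q := by
  have hpq : 0 < p - q := sub_pos.2 hqp
  have h_excess : a ^ (p - q) ≤ ρ ^ (p - q) * w ^ q * N ^ (-q) :=
    calc a ^ (p - q) ≤ (ρ * w ^ (q / (p - q)) * N ^ (-q / (p - q))) ^ (p - q) := by gcongr
      _ = ρ ^ (p - q) * w ^ q * N ^ (-q) := by
        rw [Real.mul_rpow (by positivity) (by positivity), Real.mul_rpow hρ (by positivity),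
          ← Real.rpow_mul hw, ← Real.rpow_mul hN, div_mul_cancel₀ _ hpq.ne',
          div_mul_cancel₀ _ hpq.ne']
  calc a ^ p = a ^ (p - q) * a ^ q := by rw [← Real.rpow_add' ha (by simpa), sub_add_cancel]
    _ ≤ ρ ^ (p - q) * w ^ q * N ^ (-q) * a ^ q := by gcongr
    _ = ρ ^ (p - q) * N ^ (-q) * (w * a) ^ q := by rw [Real.mul_rpow hw ha]; ring

variable {α F : Type*} [NormedAddCommGroup F] {p q s ρ N : ℝ} {w : α → ℝ} {f : α → F} {E : Set α}

lemma enorm_indicator_compl_rpow_le [NormedSpace ℝ F] (hq : 0 < q) (hqp : q < p)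
    (hw : ∀ x, 0 ≤ w x) (hρ : 0 ≤ ρ) (hN : 0 ≤ N)
    (hE : ∀ x ∉ E, ‖f x‖ ≤ ρ * w x ^ (q / (p - q)) * N ^ (-q / (p - q))) (x : α) :
    ‖Eᶜ.indicator f x‖ₑ ^ p ≤ ENNReal.ofReal (ρ ^ (p - q) * N ^ (-q)) * ‖w x • f x‖ₑ ^ q := by
  have hp : 0 < p := hq.trans hqp
  by_cases hx : x ∈ E
  · simp [hx, hp]
  · rw [Set.indicator_of_mem (Set.mem_compl hx), ← ofReal_norm, ← ofReal_norm,
      ENNReal.ofReal_rpow_of_nonneg (norm_nonneg _) hp.le,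
      ENNReal.ofReal_rpow_of_nonneg (norm_nonneg _) hq.le, ← ENNReal.ofReal_mul (by positivity),
      norm_smul, Real.norm_of_nonneg (hw x)]
    exact ENNReal.ofReal_le_ofReal <|
      rpow_le_of_le_mul_rpow_mul_rpow hp.ne' hqp (norm_nonneg _) hρ (hw x) hN (hE x hx)

variable [MeasurableSpace α] {μ : Measure α}

lemma eLpNorm'_le_ofReal_rpow_of_lintegral_le (hp : 0 ≤ p) (hρ : 0 ≤ ρ)
    (h : ∫⁻ x, ‖f x‖ₑ ^ p ∂μ ≤ ENNReal.ofReal (ρ ^ s)) :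
    eLpNorm' f p μ ≤ ENNReal.ofReal (ρ ^ (s / p)) :=
  calc eLpNorm' f p μ ≤ ENNReal.ofReal (ρ ^ s) ^ (1 / p) :=
        ENNReal.rpow_le_rpow h (by positivity)
    _ = ENNReal.ofReal (ρ ^ (s / p)) := by
        rw [ENNReal.ofReal_rpow_of_nonneg (by positivity) (by positivity), ← Real.rpow_mul hρ,
          mul_one_div]

variable [NormedSpace ℝ F]

lemma lintegral_enorm_indicator_compl_rpow_le (hq : 0 < q) (hqp : q < p) (hw : ∀ x, 0 ≤ w x)
    (hρ : 0 ≤ ρ) (hN : 0 < N) (hN_le : ∫⁻ x, ‖w x • f x‖ₑ ^ q ∂μ ≤ ENNReal.ofReal (N ^ q))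
    (hE : ∀ x ∉ E, ‖f x‖ ≤ ρ * w x ^ (q / (p - q)) * N ^ (-q / (p - q))) :
    ∫⁻ x, ‖Eᶜ.indicator f x‖ₑ ^ p ∂μ ≤ ENNReal.ofReal (ρ ^ (p - q)) :=
  calc ∫⁻ x, ‖Eᶜ.indicator f x‖ₑ ^ p ∂μ
      ≤ ∫⁻ x, ENNReal.ofReal (ρ ^ (p - q) * N ^ (-q)) * ‖w x • f x‖ₑ ^ q ∂μ :=
        lintegral_mono (enorm_indicator_compl_rpow_le hq hqp hw hρ hN.le hE)
    _ = ENNReal.ofReal (ρ ^ (p - q) * N ^ (-q)) * ∫⁻ x, ‖w x • f x‖ₑ ^ q ∂μ :=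
        lintegral_const_mul' _ _ ENNReal.ofReal_ne_top
    _ ≤ ENNReal.ofReal (ρ ^ (p - q) * N ^ (-q)) * ENNReal.ofReal (N ^ q) := by gcongr
    _ = ENNReal.ofReal (ρ ^ (p - q)) := by
        rw [← ENNReal.ofReal_mul (by positivity), mul_assoc, ← Real.rpow_add hN, neg_add_cancel,
          Real.rpow_zero, mul_one]

theorem stmt9_general (hq : 0 < q) (hqp : q < p) (hw : ∀ x, 0 ≤ w x)
    (h_zero : eLpNorm' (fun x ↦ w x • f x) q μ ≠ 0)
    (h_top : eLpNorm' (fun x ↦ w x • f x) q μ ≠ ∞) (hρ : 0 ≤ ρ)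
    (hE : ∀ x ∉ E, ‖f x‖ ≤ ρ * w x ^ (q / (p - q)) *
      (eLpNorm' (fun x ↦ w x • f x) q μ).toReal ^ (-q / (p - q))) :
    ∫⁻ x, ‖Eᶜ.indicator f x‖ₑ ^ p ∂μ ≤ ENNReal.ofReal (ρ ^ (p - q)) ∧
    eLpNorm' (Eᶜ.indicator f) p μ ≤ ENNReal.ofReal (ρ ^ (1 - q / p)) := by
  have hp : 0 < p := hq.trans hqp
  have hN := ENNReal.toReal_pos h_zero h_top
  have h_norm : ∫⁻ x, ‖w x • f x‖ₑ ^ q ∂μ =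
      ENNReal.ofReal ((eLpNorm' (fun x ↦ w x • f x) q μ).toReal ^ q) := by
    rw [lintegral_rpow_enorm_eq_rpow_eLpNorm' hq, ← ENNReal.ofReal_rpow_of_pos hN,
      ENNReal.ofReal_toReal h_top]
  have h_lintegral := lintegral_enorm_indicator_compl_rpow_le hq hqp hw hρ hN h_norm.le hE
  refine ⟨h_lintegral, ?_⟩
  rw [← div_self hp.ne', ← sub_div]
  exact eLpNorm'_le_ofReal_rpow_of_lintegral_le hp.le hρ h_lintegral

end MeasureSpace

section Sequence

open MeasureTheory

lemma ofReal_abs_rpow_eq_enorm_rpow {p : ℝ} (hp : 0 ≤ p) (x : ℝ) :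
    ENNReal.ofReal (|x| ^ p) = ‖x‖ₑ ^ p := by
  rw [Real.enorm_eq_ofReal_abs, ENNReal.ofReal_rpow_of_nonneg (abs_nonneg x) hp]

lemma pNorm_eq_eLpNorm' {p : ℝ} (hp : 0 ≤ p) (a : ℕ → ℝ) :
    pNorm p a = eLpNorm' a p Measure.count := by
  simp only [pNorm, eLpNorm', lintegral_count, ofReal_abs_rpow_eq_enorm_rpow hp]

lemma wNorm_eq_eLpNorm' (w a : ℕ → ℝ) :
    wNorm w a = eLpNorm' (fun n ↦ w n • a n) 2 Measure.count := by
  have h_term (n : ℕ) : ENNReal.ofReal (a n ^ 2 * w n ^ 2) = ‖w n • a n‖ₑ ^ (2 : ℝ) := by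
    rw [← ofReal_abs_rpow_eq_enorm_rpow zero_le_two, Real.rpow_two, sq_abs, smul_eq_mul, mul_pow,
      mul_comm]
  simp only [wNorm, eLpNorm', lintegral_count, h_term]

lemma tsum_subtype_abs_rpow_eq_lintegral_indicator {α : Type*} [MeasurableSpace α]
    [MeasurableSingletonClass α] {p : ℝ} (hp : 0 < p) (y : α → ℝ) (S : Set α) :
    ∑' j : S, ENNReal.ofReal (|y j| ^ p) = ∫⁻ n, ‖S.indicator y n‖ₑ ^ p ∂Measure.count := by
  rw [lintegral_count, tsum_subtype S fun n ↦ ENNReal.ofReal (|y n| ^ p)]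
  refine tsum_congr fun n ↦ ?_
  by_cases hn : n ∈ S
  · simp only [Set.indicator_of_mem hn, ofReal_abs_rpow_eq_enorm_rpow hp.le]
  · simp [hn, hp]

end Sequence

/-- for `0 < |y|_{2,w} ≤ 1`, `ρ > 0` and
`E = {j : |y(j)| ≥ ρ w_j^{2/(p-2)} |y|_{2,w}^{-2/(p-2)}}` one has
`∑_{j ∉ E} |y(j)|^p ≤ ρ^{p-2}`; in particular `|y_{|ℕ∖E}|_p ≤ ρ^{1-2/p}`. -/
theorem stmt9 (p : ℝ) (hp : 2 < p) (w : ℕ → ℝ) (hw : ∀ n, 0 < w n)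
    (y : ℕ → ℝ) (hy0 : 0 < wNorm w y) (hy1 : wNorm w y ≤ 1)
    (ρ : ℝ) (hρ : 0 < ρ)
    (E : Set ℕ)
    (hEdef : E = {j : ℕ | |y j| ≥ ρ * w j ^ (2 / (p - 2)) * (wNorm w y).toReal ^ (-2 / (p - 2))}) :
    (∑' j : ↥Eᶜ, ENNReal.ofReal (|y (j : ℕ)| ^ p)) ≤ ENNReal.ofReal (ρ ^ (p - 2)) ∧
    pNorm p (Eᶜ.indicator y) ≤ ENNReal.ofReal (ρ ^ (1 - 2 / p)) := by
  have hp0 : 0 < p := two_pos.trans hp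
  rw [wNorm_eq_eLpNorm'] at hy0 hy1 hEdef
  rw [tsum_subtype_abs_rpow_eq_lintegral_indicator hp0, pNorm_eq_eLpNorm' hp0.le]
  subst hEdef
  exact stmt9_general two_pos hp (fun n ↦ (hw n).le) hy0.ne' (hy1.trans_lt ENNReal.one_lt_top).ne
    hρ.le fun _ hj ↦ (not_le.1 hj).le
end
end
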